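/- arXiv:1301.6457 — 2 statements merged into one kernel-verified Lean document; each statement's English description precedes it below -/
import Mathlib

section
/- Let R be a commutative Noetherian ring and M a finitely generated R-module with no embedded primes. Given natural numbers n_𝔭 ≤ ℓ_𝔭(M) for each associated prime 𝔭 of M, there exists a submodule N ⊆ M with ℓ_𝔭(N) = n_𝔭 for all primes 𝔭. (Special case: for each associated prime 𝔭 of M there is a submodule generated by one element isomorphic to R/𝔭.) -/
/-- The `𝔭`-torsion submodule `H⁰_𝔭(M)` of the localization `M_𝔭`: the elements of
`LocalizedModule 𝔭.primeCompl M` annihilated by some power of `𝔭 R_𝔭`. -/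
noncomputable def pTorsion {R : Type*} [CommRing R] (p : Ideal R) [p.IsPrime]
    (M : Type*) [AddCommGroup M] [Module R M] :
    Submodule (Localization.AtPrime p) (LocalizedModule p.primeCompl M) :=
  ⨆ n : ℕ,
    Submodule.torsionBySet (Localization.AtPrime p) (LocalizedModule p.primeCompl M)
      ((Ideal.map (algebraMap R (Localization.AtPrime p)) p ^ n :
        Ideal (Localization.AtPrime p)) : Set (Localization.AtPrime p))

/-- The length of a module: the Krull dimension of its lattice of submodules
(`⊥` never occurs; the value is `⊤` when there are chains of unbounded length). -/
noncomputable def modLength (A : Type*) (M : Type*) [Ring A] [AddCommGroup M] [Module A M] :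
    WithBot ℕ∞ :=
  Order.krullDim (Submodule A M)

/-- The local multiplicity `ℓ_𝔭(M)`: the length over `R_𝔭` of the `𝔭`-torsion submodule
of the localization `M_𝔭`. -/
noncomputable def lmult {R : Type*} [CommRing R] (p : PrimeSpectrum R)
    (M : Type*) [AddCommGroup M] [Module R M] : WithBot ℕ∞ :=
  modLength (Localization.AtPrime p.asIdeal) (pTorsion p.asIdeal M)

/-- Length of the localization of a module at a prime. -/
noncomputable def locLen {R : Type*} [CommRing R] (p : PrimeSpectrum R)
    (M : Type*) [AddCommGroup M] [Module R M] : ℕ∞ :=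
  Module.length (Localization.AtPrime p.asIdeal) (LocalizedModule p.asIdeal.primeCompl M)

theorem locLen_add {R : Type*} [CommRing R] (p : PrimeSpectrum R)
    {A B C : Type*} [AddCommGroup A] [Module R A] [AddCommGroup B] [Module R B]
    [AddCommGroup C] [Module R C] (f : A →ₗ[R] B) (g : B →ₗ[R] C)
    (hf : Function.Injective f) (hg : Function.Surjective g) (H : Function.Exact f g) :
    locLen p B = locLen p A + locLen p C :=
  Module.length_eq_add_of_exact
    (LocalizedModule.map p.asIdeal.primeCompl f) (LocalizedModule.map p.asIdeal.primeCompl g)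
    (LocalizedModule.map_injective _ f hf) (LocalizedModule.map_surjective _ g hg)
    (LocalizedModule.map_exact _ f g H)

theorem lmult_eq_zero {R : Type*} [CommRing R] [IsNoetherianRing R] (p : PrimeSpectrum R)
    (M : Type*) [AddCommGroup M] [Module R M] (hp : p.asIdeal ∉ associatedPrimes R M) :
    lmult p M = 0 := by
  have hbot : pTorsion p.asIdeal M = ⊥ := by
    unfold pTorsion
    rw [iSup_eq_bot]
    intro n
    rw [eq_bot_iff]
    intro x hx
    by_contra hx0
    have hx0 : x ≠ 0 := fun h => hx0 (by simp [h])
    obtain ⟨Q, hQ, hle⟩ := exists_le_isAssociatedPrime_of_isNoetherianRing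
      (Localization.AtPrime p.asIdeal) x hx0
    have hQp := hQ.isPrime
    have h1 : Ideal.map (algebraMap R (Localization.AtPrime p.asIdeal)) p.asIdeal ^ n ≤ Q := by
      refine le_trans ?_ hle
      intro a ha
      rw [Submodule.mem_colon_singleton, Submodule.mem_bot]
      exact (Submodule.mem_torsionBySet_iff _ _).1 hx ⟨a, ha⟩
    have h2 := hQp.le_of_pow_le h1
    rw [Localization.AtPrime.map_eq_maximalIdeal] at h2
    have h3 : Q = IsLocalRing.maximalIdeal (Localization.AtPrime p.asIdeal) :=
      le_antisymm (IsLocalRing.le_maximalIdeal hQp.ne_top) h2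
    apply hp
    have h4 := Module.associatedPrimes.comap_mem_associatedPrimes_of_mem_associatedPrimes_of_isLocalizedModule_of_fg
      p.asIdeal.primeCompl (LocalizedModule.mkLinearMap p.asIdeal.primeCompl M) Q hQ
      ((isNoetherianRing_iff_ideal_fg R).mp ‹_› _)
    rw [h3] at h4
    simpa [Localization.AtPrime.under_maximalIdeal] using h4
  unfold lmult modLength
  rw [← Module.coe_length, hbot, Module.length_bot]
  rfl

theorem lmult_eq_locLen {R : Type*} [CommRing R] [IsNoetherianRing R] (p : PrimeSpectrum R)
    (M : Type*) [AddCommGroup M] [Module R M] (I : Ideal R) (hI : I ≤ Module.annihilator R M)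
    (hp : p.asIdeal ∈ I.minimalPrimes) :
    lmult p M = (locLen p M : WithBot ℕ∞) := by
  have htop : pTorsion p.asIdeal M = ⊤ := by
    have hr := IsLocalization.AtPrime.radical_map_of_mem_minimalPrimes
      (A := Localization.AtPrime p.asIdeal) p.asIdeal I hp
    obtain ⟨n, hn⟩ := Ideal.exists_pow_le_of_le_radical_of_fg hr.ge
      ((isNoetherianRing_iff_ideal_fg _).mp inferInstance _)
    rw [eq_top_iff]
    intro x _
    refine Submodule.mem_iSup_of_mem n ?_
    rw [Submodule.mem_torsionBySet_iff]
    rintro ⟨a, ha⟩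
    have ha' := hn ha
    have hle : Ideal.map (algebraMap R (Localization.AtPrime p.asIdeal)) I ≤
        (⊥ : Submodule (Localization.AtPrime p.asIdeal)
          (LocalizedModule p.asIdeal.primeCompl M)).colon {x} := by
      rw [Ideal.map_le_iff_le_comap]
      intro r hr
      rw [Ideal.mem_comap, Submodule.mem_colon_singleton, Submodule.mem_bot, algebraMap_smul]
      induction x using LocalizedModule.induction_on with
      | h m s =>
        rw [LocalizedModule.smul'_mk, Module.mem_annihilator.1 (hI hr) m, LocalizedModule.zero_mk]
    have := hle ha'
    rwa [Submodule.mem_colon_singleton, Submodule.mem_bot] at this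
  unfold lmult modLength locLen
  rw [← Module.coe_length, htop, Module.length_top]

theorem locLen_eq_zero {R : Type*} [CommRing R] (p : PrimeSpectrum R)
    (M : Type*) [AddCommGroup M] [Module R M] (s : R) (hs : s ∉ p.asIdeal)
    (h : ∀ m : M, s • m = 0) : locLen p M = 0 := by
  unfold locLen
  rw [Module.length_eq_zero_iff]
  exact Module.notMem_support_iff.1 (Module.notMem_support_iff'.2 fun m => ⟨s, hs, h m⟩)

theorem locLen_le_one {R : Type*} [CommRing R] (p : PrimeSpectrum R)
    (M : Type*) [AddCommGroup M] [Module R M] (x : M) (hx : ∀ m : M, ∃ r : R, r • x = m)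
    (h : ∀ s ∈ p.asIdeal, s • x = 0) : locLen p M ≤ 1 := by
  unfold locLen
  set A := Localization.AtPrime p.asIdeal
  set y : LocalizedModule p.asIdeal.primeCompl M := LocalizedModule.mk x 1
  have hk : IsLocalRing.maximalIdeal A ≤ LinearMap.ker (LinearMap.toSpanSingleton A _ y) := by
    rw [← Localization.AtPrime.map_eq_maximalIdeal]
    rw [Ideal.map_le_iff_le_comap]
    intro r hr
    rw [Ideal.mem_comap, LinearMap.mem_ker, LinearMap.toSpanSingleton_apply, algebraMap_smul,
      LocalizedModule.smul'_mk, h r hr, LocalizedModule.zero_mk]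
  have hsurj : Function.Surjective (Submodule.liftQ _ _ hk) := by
    intro z
    induction z using LocalizedModule.induction_on with
    | h m s =>
      obtain ⟨r, rfl⟩ := hx m
      refine ⟨Submodule.Quotient.mk (Localization.mk r s), ?_⟩
      rw [Submodule.liftQ_apply, LinearMap.toSpanSingleton_apply, LocalizedModule.mk_smul_mk,
        mul_one]
  refine (Module.length_le_of_surjective _ hsurj).trans ?_
  have : IsSimpleModule A (A ⧸ IsLocalRing.maximalIdeal A) :=
    isSimpleModule_iff_isCoatom.2 (IsLocalRing.maximalIdeal.isMaximal A).out
  exact (Module.length_eq_one _ _).le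


/-- For a finitely generated module `M` without embedded primes over a commutative
Noetherian ring, any prescription of natural numbers `n 𝔭 ≤ ℓ_𝔭(M)`, vanishing at the
non-associated primes, is realized as the collection of local multiplicities of some
submodule `N ⊆ M`. -/
theorem exists_submodule_lmult {R : Type*} [CommRing R] [IsNoetherianRing R]
    (M : Type*) [AddCommGroup M] [Module R M] [Module.Finite R M]
    (hM : ∀ p ∈ associatedPrimes R M, p ∈ (Module.annihilator R M).minimalPrimes)
    (n : Ideal R → ℕ)
    (hle : ∀ p : PrimeSpectrum R, (n p.asIdeal : WithBot ℕ∞) ≤ lmult p M)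
    (h0 : ∀ p : PrimeSpectrum R, p.asIdeal ∉ associatedPrimes R M → n p.asIdeal = 0) :
    ∃ N : Submodule R M, ∀ p : PrimeSpectrum R,
      lmult p N = (n p.asIdeal : WithBot ℕ∞) := by
  have hAnn : ∀ N : Submodule R M, Module.annihilator R M ≤ Module.annihilator R N := fun N =>
    LinearMap.annihilator_le_of_injective N.subtype N.subtype_injective
  let S : Set (Submodule R M) := {N | ∀ p : PrimeSpectrum R, p.asIdeal ∈ associatedPrimes R M →
    locLen p N ≤ n p.asIdeal}
  have hS : S.Nonempty := by
    refine ⟨⊥, fun p _ => ?_⟩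
    rw [locLen_eq_zero p _ 1 (fun h => p.2.ne_top ((Ideal.eq_top_iff_one _).2 h))
      (fun m => Subsingleton.elim _ _)]
    exact zero_le
  obtain ⟨N, hN, hmax⟩ := set_has_maximal_iff_noetherian.mpr
    (inferInstance : IsNoetherian R M) S hS
  refine ⟨N, fun p => ?_⟩
  by_cases hp : p.asIdeal ∈ associatedPrimes R M
  swap
  · rw [h0 p hp, lmult_eq_zero p N
      (fun h => hp (associatedPrimes.subset_of_injective N.subtype_injective h))]
    rfl
  have hmin := hM _ hp
  rw [lmult_eq_locLen p N _ (hAnn N) hmin]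
  have hle' := hle p
  rw [lmult_eq_locLen p M _ le_rfl hmin] at hle'
  replace hle' : (n p.asIdeal : ℕ∞) ≤ locLen p M := WithBot.coe_le_coe.1 hle'
  suffices locLen p N = n p.asIdeal by rw [this]; rfl
  by_contra hne
  have hlt : locLen p N < n p.asIdeal := lt_of_le_of_ne (hN p hp) hne
  have hadd := locLen_add p N.subtype N.mkQ N.subtype_injective N.mkQ_surjective
    (LinearMap.exact_subtype_mkQ N)
  have hsupp : p ∈ Module.support R (M ⧸ N) := by
    by_contra hns
    rw [Module.notMem_support_iff] at hns
    have h0 : locLen p (M ⧸ N) = 0 := Module.length_eq_zero_iff.2 hns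
    rw [h0, add_zero] at hadd
    exact absurd (hle'.trans hadd.le) (not_le.2 hlt)
  have hAnnQ : Module.annihilator R M ≤ Module.annihilator R (M ⧸ N) :=
    LinearMap.annihilator_le_of_surjective N.mkQ N.mkQ_surjective
  have hminQ : p.asIdeal ∈ (Module.annihilator R (M ⧸ N)).minimalPrimes :=
    ⟨⟨p.2, Module.annihilator_le_of_mem_support hsupp⟩,
      fun r hr hrp => hmin.2 ⟨hr.1, hAnnQ.trans hr.2⟩ hrp⟩
  have hassQ := Module.associatedPrimes.minimalPrimes_annihilator_subset_associatedPrimes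
    R (M ⧸ N) hminQ
  obtain ⟨-, x, hx⟩ := isAssociatedPrime_iff.1 hassQ
  have hxmem : ∀ r, r ∈ p.asIdeal ↔ r • x = 0 := fun r => by
    rw [hx, Submodule.mem_colon_singleton, Submodule.mem_bot]
  let T : Submodule R (M ⧸ N) := Submodule.span R {x}
  let N' : Submodule R M := T.comap N.mkQ
  have hNN' : N ≤ N' := fun m hm => by
    have : N.mkQ m = 0 := by simpa using hm
    change N.mkQ m ∈ T
    rw [this]
    exact T.zero_mem
  let g : N' →ₗ[R] T := N.mkQ.restrict (fun _ h => h)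
  have hg : Function.Surjective g := by
    rintro ⟨t, ht⟩
    obtain ⟨m, rfl⟩ := N.mkQ_surjective t
    exact ⟨⟨m, ht⟩, rfl⟩
  have hex : Function.Exact (Submodule.inclusion hNN') g := by
    rintro ⟨m, hm⟩
    have h1 : g ⟨m, hm⟩ = 0 ↔ N.mkQ m = 0 := Subtype.ext_iff
    rw [h1, Submodule.mkQ_apply, Submodule.Quotient.mk_eq_zero]
    constructor
    · intro h
      exact ⟨⟨m, h⟩, rfl⟩
    · rintro ⟨⟨a, ha⟩, h⟩
      have : a = m := congrArg Subtype.val h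
      exact this ▸ ha
  have hadd' : ∀ q : PrimeSpectrum R, locLen q N' = locLen q N + locLen q T := fun q =>
    locLen_add q _ g (Submodule.inclusion_injective hNN') hg hex
  refine hmax N' ?_ ?_
  · intro q hq
    rw [hadd' q]
    by_cases hqp : q = p
    · subst hqp
      have h1 : locLen q T ≤ 1 := by
        refine locLen_le_one q T ⟨x, Submodule.mem_span_singleton_self x⟩ ?_ ?_
        · rintro ⟨m, hm⟩
          obtain ⟨r, rfl⟩ := Submodule.mem_span_singleton.1 hm
          exact ⟨r, rfl⟩
        · intro s hs
          exact Subtype.ext ((hxmem s).1 hs)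
      exact (add_le_add_right h1 _).trans (Order.add_one_le_of_lt hlt)
    · have : ¬ p.asIdeal ≤ q.asIdeal := fun h =>
        hqp (PrimeSpectrum.ext (le_antisymm ((hM _ hq).2 hmin.1 h) h))
      obtain ⟨s, hsp, hsq⟩ := SetLike.not_le_iff_exists.1 this
      rw [locLen_eq_zero q T s hsq, add_zero]
      · exact hN q hq
      · rintro ⟨m, hm⟩
        obtain ⟨r, rfl⟩ := Submodule.mem_span_singleton.1 hm
        apply Subtype.ext
        change s • r • x = 0
        rw [smul_comm, (hxmem s).1 hsp, smul_zero]
  · refine lt_of_le_of_ne hNN' fun heq => ?_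
    obtain ⟨m, rfl⟩ := N.mkQ_surjective x
    have hm : m ∈ N' := Submodule.mem_span_singleton_self _
    rw [← heq] at hm
    apply p.2.ne_top
    rw [Ideal.eq_top_iff_one, hxmem, one_smul]
    simpa using hm
end

section
/- Let R be a commutative Noetherian ring, M a finitely generated R-module, and 𝔡 ⊆ M the largest submodule of finite length. If U ⊆ M is a submodule such that the quotient M/U has ℓ_𝔭(M/U) injecting into H¹_𝔭(U) for all primes (i.e., U is open: ℓ_𝔭(U) = ℓ_𝔭(M) for all 𝔭), then 𝔡 ⊆ U. In particular, every open submodule contains the maximal finite-length submodule of M. -/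
section Helpers

/-- The `I`-power torsion of a module. -/
noncomputable def powTors {A : Type*} [CommRing A] (I : Ideal A)
    (N : Type*) [AddCommGroup N] [Module A N] : Submodule A N :=
  ⨆ n : ℕ, Submodule.torsionBySet A N ((I ^ n : Ideal A) : Set A)

lemma powTors_mono {A : Type*} [CommRing A] (I : Ideal A)
    (N : Type*) [AddCommGroup N] [Module A N] :
    Monotone fun n : ℕ => Submodule.torsionBySet A N ((I ^ n : Ideal A) : Set A) :=
  fun _ _ h => Submodule.torsionBySet_le_torsionBySet_of_subset (Ideal.pow_le_pow_right h)

lemma mem_powTors {A : Type*} [CommRing A] (I : Ideal A)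
    (N : Type*) [AddCommGroup N] [Module A N] (x : N) :
    x ∈ powTors I N ↔ ∃ n : ℕ, ∀ a ∈ I ^ n, a • x = 0 := by
  unfold powTors
  rw [Submodule.mem_iSup_of_directed _ (powTors_mono I N).directed_le]
  simp [Submodule.mem_torsionBySet_iff]

lemma powTors_artinian {A : Type*} [CommRing A] [IsNoetherianRing A] [IsLocalRing A]
    (N : Type*) [AddCommGroup N] [Module A N] [Module.Finite A N] :
    IsArtinian A (powTors (IsLocalRing.maximalIdeal A) N) := by
  set m := IsLocalRing.maximalIdeal A with hm
  obtain ⟨n, hn⟩ := monotone_stabilizes_iff_noetherian.mpr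
    (inferInstance : IsNoetherian A N) ⟨_, powTors_mono m N⟩
  have tors : Module.IsTorsionBySet A (powTors m N) ((m ^ (n + 1) : Ideal A) : Set A) := by
    rintro ⟨x, hx⟩ ⟨a, ha⟩
    rw [mem_powTors] at hx
    obtain ⟨k, hk⟩ := hx
    have h1 : x ∈ Submodule.torsionBySet A N ((m ^ (max n k) : Ideal A) : Set A) :=
      powTors_mono m N (le_max_right n k)
        ((Submodule.mem_torsionBySet_iff _ _).mpr fun a => hk a.1 a.2)
    have h2 := hn (max n k) (le_max_left n k)
    simp only [OrderHom.coe_mk] at h2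
    rw [← h2] at h1
    rw [Submodule.mem_torsionBySet_iff] at h1
    ext
    exact h1 ⟨a, Ideal.pow_le_pow_right (Nat.le_succ n) ha⟩
  have : IsArtinianRing (A ⧸ m ^ (n + 1)) := by
    apply IsLocalRing.quotient_artinian_of_mem_minimalPrimes_of_isLocalRing
    refine ⟨⟨inferInstance, Ideal.pow_le_self (Nat.succ_ne_zero n)⟩, ?_⟩
    rintro q ⟨hq, hq'⟩ _
    exact hq.le_of_pow_le hq'
  letI := tors.module
  have : Module.Finite (A ⧸ m ^ (n + 1)) (powTors m N) := Module.Finite.of_restrictScalars_finite A _ _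
  have : IsArtinian (A ⧸ m ^ (n + 1)) (powTors m N) := inferInstance
  exact isArtinian_of_surjective_algebraMap (R := A ⧸ m ^ (n + 1)) Ideal.Quotient.mk_surjective

lemma powTors_le_range {A : Type*} [CommRing A] [IsNoetherianRing A] [IsLocalRing A]
    {N N' : Type*} [AddCommGroup N] [Module A N] [Module.Finite A N]
    [AddCommGroup N'] [Module A N'] (f : N' →ₗ[A] N) (hf : Function.Injective f)
    (h : Module.length A (powTors (IsLocalRing.maximalIdeal A) N') =
      Module.length A (powTors (IsLocalRing.maximalIdeal A) N)) :
    powTors (IsLocalRing.maximalIdeal A) N ≤ LinearMap.range f := by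
  have := powTors_artinian (A := A) N
  have hmap : ∀ x ∈ powTors (IsLocalRing.maximalIdeal A) N',
      f x ∈ powTors (IsLocalRing.maximalIdeal A) N := by
    intro x hx
    rw [mem_powTors] at hx ⊢
    obtain ⟨n, hn⟩ := hx
    exact ⟨n, fun a ha => by rw [← map_smul, hn a ha, map_zero]⟩
  let g := f.restrict hmap
  have hg : Function.Injective g := fun x y hxy =>
    Subtype.ext (hf (congrArg Subtype.val hxy))
  have hr : LinearMap.range g = ⊤ := by
    by_contra hne
    have h1 := Submodule.length_lt hne
    rw [← (LinearEquiv.ofInjective g hg).length_eq, h] at h1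
    exact lt_irrefl _ h1
  intro y hy
  obtain ⟨x, hx⟩ := LinearMap.range_eq_top.mp hr ⟨y, hy⟩
  exact ⟨x, congrArg Subtype.val hx⟩

lemma exists_pow_kill {R : Type*} [CommRing R] {M : Type*} [AddCommGroup M] [Module R M]
    [IsNoetherianRing R] (D : Submodule R M) [IsArtinian R D] (m : Ideal R) (hm : m ≠ ⊤)
    (x : M) (hx : x ∈ D) : ∃ n : ℕ, ∃ r ∉ m, ∀ a ∈ m ^ n, r • a • x = 0 := by
  let N : ℕ → Submodule R D := fun n => m ^ n • Submodule.span R {⟨x, hx⟩}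
  obtain ⟨n, hn⟩ := IsArtinian.monotone_stabilizes
    (⟨fun n => OrderDual.toDual (N n), fun i j h =>
      Submodule.smul_mono_left (Ideal.pow_le_pow_right h)⟩ : ℕ →o (Submodule R D)ᵒᵈ)
  have h1 : N n = N (n + 1) := hn (n + 1) (Nat.le_succ n)
  have h2 : N n ≤ m • N n := by
    conv_lhs => rw [h1]
    simp only [N]
    rw [pow_succ', Submodule.mul_smul]
  have hfg : (N n).FG := Submodule.FG.smul (IsNoetherian.noetherian _) (Submodule.fg_span_singleton _)
  obtain ⟨r, hr, hr'⟩ := Submodule.exists_sub_one_mem_and_smul_eq_zero_of_fg_of_le_smul m _ hfg h2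
  refine ⟨n, r, fun hrm => hm ?_, fun a ha => ?_⟩
  · rw [Ideal.eq_top_iff_one]
    simpa using m.sub_mem hrm hr
  · exact congrArg Subtype.val (hr' (a • ⟨x, hx⟩)
      (Submodule.smul_mem_smul ha (Submodule.mem_span_singleton_self _)))

end Helpers

/-- Every open submodule `U ⊆ M` (one with `ℓ_𝔭(U) = ℓ_𝔭(M)` for all primes `𝔭`) contains
the largest finite-length submodule of `M`. -/
theorem finiteLength_le_open {R : Type*} [CommRing R] [IsNoetherianRing R]
    {M : Type*} [AddCommGroup M] [Module R M] [Module.Finite R M]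
    (D : Submodule R M) (hD : IsFiniteLength R D)
    (hDmax : ∀ D' : Submodule R M, IsFiniteLength R D' → D' ≤ D)
    (U : Submodule R M) (hU : ∀ p : PrimeSpectrum R, lmult p U = lmult p M) :
    D ≤ U := by
  have hart : IsArtinian R D := (isFiniteLength_iff_isNoetherian_isArtinian.mp hD).2
  intro x hx
  let J : Ideal R := U.comap (LinearMap.toSpanSingleton R M x)
  have hJ : ∀ r, r ∈ J ↔ r • x ∈ U := fun r => by simp [J]
  suffices J = ⊤ by
    have h1 := (hJ 1).mp (this ▸ Submodule.mem_top)
    simpa using h1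
  by_contra hne
  obtain ⟨m, hm, hJm⟩ := Ideal.exists_le_maximal J hne
  have hp := hU ⟨m, hm.isPrime⟩
  have := hm.isPrime
  let A := Localization.AtPrime m
  have : IsNoetherianRing A := IsLocalization.isNoetherianRing m.primeCompl A inferInstance
  have hlen : Module.length A (powTors (IsLocalRing.maximalIdeal A)
      (LocalizedModule m.primeCompl U)) =
      Module.length A (powTors (IsLocalRing.maximalIdeal A)
      (LocalizedModule m.primeCompl M)) := by
    apply WithBot.coe_injective
    rw [Module.coe_length, Module.coe_length, ← Localization.AtPrime.map_eq_maximalIdeal]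
    exact hp
  have hle := powTors_le_range (LocalizedModule.map m.primeCompl U.subtype)
    (LocalizedModule.map_injective m.primeCompl U.subtype U.subtype_injective) hlen
  obtain ⟨n, r, hr, hk⟩ := exists_pow_kill D m hm.ne_top x hx
  have hxT : LocalizedModule.mk x 1 ∈ powTors (IsLocalRing.maximalIdeal A)
      (LocalizedModule m.primeCompl M) := by
    rw [mem_powTors]
    refine ⟨n, fun a ha => ?_⟩
    rw [← Localization.AtPrime.map_eq_maximalIdeal, ← Ideal.map_pow,
      IsLocalization.mem_map_algebraMap_iff m.primeCompl] at ha
    obtain ⟨⟨⟨b, hb⟩, s⟩, hs⟩ := ha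
    simp only at hs
    have h0 : a • (LocalizedModule.mk x 1 : LocalizedModule m.primeCompl M) =
        0 := by
      have hunit := IsLocalization.map_units A s
      apply (hunit.smul_eq_zero).mp
      rw [smul_smul, mul_comm, hs, algebraMap_smul, LocalizedModule.smul'_mk,
        ← LocalizedModule.zero_mk 1, LocalizedModule.mk_eq]
      exact ⟨⟨r, hr⟩, by simpa [Submonoid.smul_def] using hk b hb⟩
    exact h0
  obtain ⟨y, hy⟩ := hle hxT
  induction y using LocalizedModule.induction_on with
  | _ u s =>
  rw [LocalizedModule.map_mk, LocalizedModule.mk_eq] at hy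
  obtain ⟨c, hc⟩ := hy
  have hmem : ((c * s : m.primeCompl) : R) ∈ J := by
    rw [hJ]
    have h2 : ((c * s : m.primeCompl) : R) • x = (c : R) • (u : M) := by
      simpa [Submonoid.smul_def, mul_smul] using hc.symm
    rw [h2]
    exact U.smul_mem _ u.2
  exact (c * s).2 (hJm hmem)
end
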